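/- Let (RB, f^K) be a modal relativized Boolean algebra, h : ℒ(ℙ) → RB a homomorphism with extension h⁺ to ℒ^{A,K}(ℙ), and let M = (F^RB, ≥^RB, R^RB, L^h, V^h) be the awareness model on the ultrafilter frame with L^h(p) = {u ∈ F^RB : 1_{h(p)} ∈ u} and V^h(p) = {u ∈ F^RB : h(p) ∈ u}. Then for all φ ∈ ℒ^{A,K}(ℙ), L^h(φ) = {u ∈ F^RB : 1_{h⁺(φ)} ∈ u} and V^h(φ) = {u ∈ F^RB : h⁺(φ) ∈ u}. -/

import Mathlib

/-!
This is the truth lemma for the ultrafilter frame. `≥` is the order of the meet-semilattice, and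
`1_X = X ∨ 1` by (rb3), so distributivity gives `1_{X ∧ Y} = 1_X ∧ 1_Y`, while `1_{¬X} = 1_X` and
`1_{f^K(X)} = 1_X`. Filters therefore contain `1_{h⁺(φ)}` exactly when they contain `1_{h(p)}` for
all variables `p` of `φ`, which is the claim about `L^h`.

For `V^h`, one inducts on `φ`. An element `u` of `F^RB` with `1_X ∈ u` contains exactly one of `X`
and `¬X` (`FRB_decides`), which settles negation. For `K` and `A`, the set `{X : f^K(X) ∈ u}` is a
strongly proper filter by (f2), (f3), (fD), and what remains is the prime filter theorem
`exists_FRB_avoiding`: a strongly proper filter `g` with `y ∉ g` extends to some `v ∈ F^RB` with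
`y ∉ v`.

The extension must not enlarge the set of elements `1_X` when `1_y ∉ g`, so Zorn's lemma is applied
to the strongly proper filters `v ⊇ g` with the same elements `1_X` as `g`. The step that makes this
work is `adjoin_stronglyProper`: if `1_y ∈ g` and `y ∉ g`, then adjoining `¬y` keeps the filter
strongly proper and adds no new `1_X`. It relies on (rb5), which allows a relation between elements
with different `1_X` to be transported to a single Boolean algebra `π₁(b)`.
-/

structure RBA (α : Type*) where
  meet : α → α → α
  join : α → α → α
  compl : α → α
  bot : α
  top : α
  meet_assoc : ∀ x y z, meet (meet x y) z = meet x (meet y z)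
  meet_comm : ∀ x y, meet x y = meet y x
  join_assoc : ∀ x y z, join (join x y) z = join x (join y z)
  join_comm : ∀ x y, join x y = join y x
  meet_distrib : ∀ x y z, meet x (join y z) = join (meet x y) (meet x z)
  join_distrib : ∀ x y z, join x (meet y z) = meet (join x y) (join x z)
  demorgan_meet : ∀ x y, compl (meet x y) = join (compl x) (compl y)
  demorgan_join : ∀ x y, compl (join x y) = meet (compl x) (compl y)
  meet_idem : ∀ x, meet x x = x
  join_idem : ∀ x, join x x = x
  meet_top : ∀ x, meet x top = x
  compl_compl : ∀ x, compl (compl x) = x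
  join_top : ∀ x, join x top = join x (compl x)
  meet_bot : ∀ x, meet x bot = bot
  rb5 : ∀ x y,
    meet (join x (compl x)) (join y (compl y)) = join x (compl x) →
    compl (meet y (join x (compl x))) = meet (compl y) (join x (compl x))

namespace RBA
variable {α : Type*}

/-- `1_X := X ∨ ¬X` -/
def one (R : RBA α) (x : α) : α := R.join x (R.compl x)

/-- `0_X := X ∧ ¬X` -/
def zero (R : RBA α) (x : α) : α := R.meet x (R.compl x)

/-- `ge R y x` means `y ≥ x`, i.e. `x ∧ y = x`. -/
def ge (R : RBA α) (y x : α) : Prop := R.meet x y = x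

end RBA

namespace RBA
variable {α : Type*}

/-- A filter on an RBA: contains `1`, upward closed under `≥`, closed under `∧`. -/
def IsFilter (R : RBA α) (u : Set α) : Prop :=
  R.top ∈ u ∧ (∀ x y, x ∈ u → R.ge y x → y ∈ u) ∧
    (∀ x y, x ∈ u → y ∈ u → R.meet x y ∈ u)

/-- A strongly proper set: contains no element of the form `X ∧ ¬X`. -/
def StronglyProper (R : RBA α) (u : Set α) : Prop := ∀ x, R.zero x ∉ u

/-- `π₁(X) := {Z : 1_Z = 1_X}`. -/
def pi1 (R : RBA α) (x : α) : Set α := {z | R.one z = R.one x}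

/-- `π₂(u) := {1_X : X ∈ RB} ∩ u`. -/
def pi2 (R : RBA α) (u : Set α) : Set α := {z | z ∈ u ∧ ∃ x, z = R.one x}

/-- A filter of the Boolean algebra `π₁(X)` (top element `1_X`). -/
def IsFilterOn (R : RBA α) (x : α) (w : Set α) : Prop :=
  w ⊆ R.pi1 x ∧ R.one x ∈ w ∧
    (∀ a b, a ∈ w → b ∈ R.pi1 x → R.ge b a → b ∈ w) ∧
    (∀ a b, a ∈ w → b ∈ w → R.meet a b ∈ w)

/-- An ultrafilter of the Boolean algebra `π₁(X)`: a strongly proper filter of `π₁(X)`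
maximal among strongly proper filters of `π₁(X)`. -/
def IsUltraOn (R : RBA α) (x : α) (w : Set α) : Prop :=
  R.IsFilterOn x w ∧ (∀ a ∈ R.pi1 x, R.zero a ∉ w) ∧
    ∀ v, R.IsFilterOn x v → (∀ a ∈ R.pi1 x, R.zero a ∉ v) → w ⊆ v → w = v

/-- `F^RB`: filters `u` such that for every `X` with `1_X ∈ u`,
`u ∩ π₁(X)` is an ultrafilter of the Boolean algebra `π₁(X)`. -/
def FRB (R : RBA α) : Set (Set α) :=
  {u | R.IsFilter u ∧ ∀ x, R.one x ∈ u → R.IsUltraOn x (u ∩ R.pi1 x)}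

end RBA

/-- A modal relativized Boolean algebra. -/
structure MRBA (α : Type*) extends RBA α where
  fK : α → α
  f1 : ∀ x, toRBA.one (fK x) = toRBA.one x
  f2 : fK toRBA.top = toRBA.top
  f3 : ∀ x y, fK (toRBA.meet x y) = toRBA.meet (fK x) (fK y)
  fD : ∀ x, fK (toRBA.zero x) = toRBA.zero x

/-- The language `ℒ^{A,K}(ℙ)`: `φ ::= p | 1 | ¬φ | (φ∧φ) | Aφ | Kφ`. -/
inductive AKForm (P : Type*) : Type _ where
  | var : P → AKForm P
  | one : AKForm P
  | neg : AKForm P → AKForm P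
  | conj : AKForm P → AKForm P → AKForm P
  | aw : AKForm P → AKForm P
  | kn : AKForm P → AKForm P

namespace AKForm
variable {P : Type*}

/-- The propositional variables occurring in a formula. -/
def vars : AKForm P → Set P
  | .var p => {p}
  | .one => ∅
  | .neg φ => φ.vars
  | .conj φ ψ => φ.vars ∪ ψ.vars
  | .aw φ => φ.vars
  | .kn φ => φ.vars

end AKForm

/-- An awareness model: a preorder `ge` (`ge w w'` meaning `w ≥ w'`), a serial
accessibility relation `Rel`, and valuations `L`, `V` with `L p` upward closed and
`V p ⊆ L p`. -/
structure AwModel (W P : Type*) where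
  ge : W → W → Prop
  ge_refl : ∀ w, ge w w
  ge_trans : ∀ a b c, ge a b → ge b c → ge a c
  Rel : W → W → Prop
  serial : ∀ w, ∃ w', Rel w w'
  L : P → Set W
  V : P → Set W
  L_up : ∀ p w w', w ∈ L p → ge w' w → w' ∈ L p
  V_sub : ∀ p, V p ⊆ L p

variable {W P : Type*}

/-- `φ ∈ ℒ^{A,K}(ω)`: every propositional variable of `φ` is in the language at `ω`. -/
def AwModel.Defined (M : AwModel W P) (ω : W) (φ : AKForm P) : Prop :=
  ∀ p ∈ φ.vars, ω ∈ M.L p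

/-- Truth at a world: `⟨M,ω⟩ ⊨ φ`. -/
def AwModel.Sat (M : AwModel W P) : AKForm P → W → Prop
  | .var p, ω => ω ∈ M.V p
  | .one, _ => True
  | .neg φ, ω => ¬ M.Sat φ ω
  | .conj φ ψ, ω => M.Sat φ ω ∧ M.Sat ψ ω
  | .aw φ, ω => ∀ ω', M.Rel ω ω' → M.Defined ω' φ
  | .kn φ, ω => ∀ ω', M.Rel ω ω' → M.Defined ω' φ ∧ M.Sat φ ω'

/-- `V(φ)`: the worlds in which `φ` is (defined and) true. -/
def AwModel.Vset (M : AwModel W P) (φ : AKForm P) : Set W :=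
  {ω | M.Defined ω φ ∧ M.Sat φ ω}

/-- `L(φ)`: the worlds in which `φ` is defined. -/
def AwModel.Lset (M : AwModel W P) (φ : AKForm P) : Set W :=
  {ω | M.Defined ω φ}

/-- The extension `h⁺` of a homomorphism `h : ℒ(ℙ) → RB` to `ℒ^{A,K}(ℙ)`, via
`h⁺(Kφ) = f^K(h⁺(φ))` and `h⁺(Aφ) = f^A(h⁺(φ)) = f^K(1_{h⁺(φ)})`. -/
def IsAKHom {P α : Type*} (M : MRBA α) (h : AKForm P → α) : Prop :=
  h .one = M.toRBA.top ∧ (∀ φ, h (.neg φ) = M.toRBA.compl (h φ)) ∧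
    (∀ φ ψ, h (.conj φ ψ) = M.toRBA.meet (h φ) (h ψ)) ∧
    (∀ φ, h (.kn φ) = M.fK (h φ)) ∧
    (∀ φ, h (.aw φ) = M.fK (M.toRBA.one (h φ)))

namespace RBA
variable {α : Type*} (R : RBA α)

/-! ### The meet order and the maps `X ↦ 1_X`, `X ↦ 0_X` -/

theorem ge_trans' {x y z : α} (h₁ : R.ge y x) (h₂ : R.ge z y) : R.ge z x := by
  unfold ge at *
  rw [← h₁, R.meet_assoc, h₂]

theorem ge_left (x y : α) : R.ge x (R.meet x y) := by
  unfold ge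
  rw [R.meet_comm, ← R.meet_assoc, R.meet_idem]

theorem ge_right (x y : α) : R.ge y (R.meet x y) := by
  rw [R.meet_comm]; exact R.ge_left y x

theorem ge_meet {x y z : α} (h₁ : R.ge x z) (h₂ : R.ge y z) : R.ge (R.meet x y) z := by
  unfold ge at *
  rw [← R.meet_assoc, h₁, h₂]

theorem ge_antisymm {x y : α} (h₁ : R.ge x y) (h₂ : R.ge y x) : x = y := by
  unfold ge at *
  rw [← h₂, R.meet_comm, h₁]

theorem ge_refl' (x : α) : R.ge x x := R.meet_idem x

theorem one_eq (x : α) : R.one x = R.join x R.top := (R.join_top x).symm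

theorem one_compl (x : α) : R.one (R.compl x) = R.one x := by
  unfold one
  rw [R.compl_compl, R.join_comm]

theorem one_meet (x y : α) : R.one (R.meet x y) = R.meet (R.one x) (R.one y) := by
  simp only [one_eq]
  rw [R.join_comm, R.join_distrib, R.join_comm x, R.join_comm y]

theorem one_top : R.one R.top = R.top := by rw [one_eq, R.join_idem]

theorem one_one (x : α) : R.one (R.one x) = R.one x := by
  simp only [one_eq]
  rw [R.join_assoc, R.join_idem]

theorem one_zero (x : α) : R.one (R.zero x) = R.one x := by
  unfold zero
  rw [one_meet, one_compl, R.meet_idem]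

theorem one_ge (x : α) : R.ge (R.one x) x := by
  unfold ge
  -- absorption holds here because the second joinand is `1`
  have : R.meet x (R.join x R.top) = R.join (R.meet x x) (R.meet x R.top) := R.meet_distrib _ _ _
  rw [one_eq, this, R.meet_idem, R.meet_top, R.join_idem]

theorem one_mono {x y : α} (h : R.ge y x) : R.ge (R.one y) (R.one x) := by
  unfold ge at *
  rw [← one_meet, h]

theorem compl_one (x : α) : R.compl (R.one x) = R.zero x := by
  unfold one zero
  rw [R.demorgan_join, R.compl_compl, R.meet_comm]

theorem zero_congr {x y : α} (h : R.one x = R.one y) : R.zero x = R.zero y := by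
  rw [← compl_one, ← compl_one, h]

theorem zero_join (x : α) : R.join (R.zero x) x = x := by
  have h : R.compl (R.join (R.zero x) x) = R.compl x := by
    rw [R.demorgan_join, ← compl_one, R.compl_compl, R.meet_comm, ← R.one_compl]
    exact R.one_ge _
  rw [← R.compl_compl (R.join _ _), h, R.compl_compl]

/-- In the Boolean algebra `π₁(a)`: if `a ∧ ¬x ≤ 0_a` then `a ≤ x`. -/
theorem ge_of_meet_compl {a x : α} (hax : R.one x = R.one a)
    (h : R.ge (R.zero a) (R.meet a (R.compl x))) : R.ge x a := by
  have h0 : R.meet a (R.compl x) = R.zero a := by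
    refine R.ge_antisymm (R.ge_meet (R.ge_left _ _) ?_) h
    rw [R.zero_congr (hax.symm.trans (R.one_compl x).symm)]
    exact R.ge_left _ _
  have h1 : a = R.join (R.meet a x) (R.meet a (R.compl x)) := by
    rw [← R.meet_distrib]
    exact (hax ▸ R.one_ge a : R.ge (R.one x) a).symm
  have h2 : R.zero a = R.zero (R.meet a x) := by
    apply R.zero_congr
    rw [one_meet, hax, R.meet_idem]
  rw [h0, h2, R.join_comm, zero_join] at h1
  rw [h1]
  exact R.ge_right _ _

/-- Below a smaller unit, `0_z` restricts to `0_b`; this is where (rb5) enters. -/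
theorem zero_meet_one {b z : α} (h : R.ge (R.one z) (R.one b)) :
    R.meet (R.zero z) (R.one b) = R.zero b := by
  have h5 := R.rb5 b (R.one z) ((congrArg _ (R.one_one z)).trans h)
  change R.compl (R.meet (R.one z) (R.one b)) = R.meet (R.compl (R.one z)) (R.one b) at h5
  have h' : R.meet (R.one b) (R.one z) = R.one b := h
  rw [R.meet_comm, h', compl_one, compl_one] at h5
  exact h5.symm

/-- A version of `ge_of_meet_compl` across different Boolean algebras `π₁`. -/
theorem ge_of_meet_compl_zero {a y z : α} (h : R.ge (R.zero z) (R.meet a (R.compl y))) :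
    R.ge y (R.meet a (R.one y)) := by
  set b := R.meet a (R.one y) with hb
  have hb1 : R.one b = R.meet (R.one a) (R.one y) := by rw [hb, one_meet, one_one]
  have hby : R.ge (R.one y) (R.one b) := hb1 ▸ R.ge_right _ _
  have hbz : R.ge (R.one z) (R.one b) := by
    have := R.one_mono h
    rwa [one_zero, one_meet, one_compl, ← hb1] at this
  -- move `y` down to `y ∧ 1_b`, which lies in `π₁(b)`
  have hy' : R.one (R.meet y (R.one b)) = R.one b := by
    rw [one_meet, one_one, R.meet_comm]; exact hby
  have hc : R.compl (R.meet y (R.one b)) = R.meet (R.compl y) (R.one b) := R.rb5 b y hby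
  refine R.ge_trans' (R.ge_of_meet_compl hy' ?_) (R.ge_left y (R.one b))
  rw [hc, ← R.zero_meet_one hbz]
  have h1 : R.ge b (R.meet b (R.meet (R.compl y) (R.one b))) := R.ge_left _ _
  have h2 := R.ge_right b (R.meet (R.compl y) (R.one b))
  exact R.ge_meet (R.ge_trans' (R.ge_meet (R.ge_trans' h1 (R.ge_left _ _))
    (R.ge_trans' h2 (R.ge_left _ _))) h) (R.ge_trans' h2 (R.ge_right _ _))

/-! ### Filters and `F^RB` -/

variable {R}

theorem IsFilter.up {u : Set α} (hu : R.IsFilter u) {x y : α} (hx : x ∈ u) (h : R.ge y x) :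
    y ∈ u := hu.2.1 x y hx h

theorem IsFilter.meet_mem {u : Set α} (hu : R.IsFilter u) {x y : α} :
    R.meet x y ∈ u ↔ x ∈ u ∧ y ∈ u :=
  ⟨fun h => ⟨hu.up h (R.ge_left _ _), hu.up h (R.ge_right _ _)⟩, fun h => hu.2.2 _ _ h.1 h.2⟩

theorem IsFilter.one_mem {u : Set α} (hu : R.IsFilter u) {x : α} (hx : x ∈ u) : R.one x ∈ u :=
  hu.up hx (R.one_ge x)

theorem FRB_stronglyProper {u : Set α} (hu : u ∈ R.FRB) : R.StronglyProper u := by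
  intro x hx
  have h1 : R.one x ∈ u := by
    rw [← R.one_zero]; exact hu.1.one_mem hx
  exact (hu.2 x h1).2.1 x rfl ⟨hx, R.one_zero x⟩

theorem StronglyProper.not_compl {u : Set α} (hu : R.IsFilter u) (hp : R.StronglyProper u) {x : α}
    (hx : x ∈ u) : R.compl x ∉ u := fun h => hp x (hu.meet_mem.2 ⟨hx, h⟩)

theorem FRB_decides {u : Set α} (hu : u ∈ R.FRB) {x : α} (h1 : R.one x ∈ u) :
    R.compl x ∈ u ↔ x ∉ u := by
  refine ⟨fun h hx => (FRB_stronglyProper hu).not_compl hu.1 hx h, fun hx => ?_⟩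
  obtain ⟨-, -, hmax⟩ := hu.2 x h1
  -- the filter of `π₁(x)` generated by `u ∩ π₁(x)` and `x`
  let v : Set α := {z | z ∈ R.pi1 x ∧ ∃ a, a ∈ u ∧ R.one a = R.one x ∧ R.ge z (R.meet a x)}
  have hv : R.IsFilterOn x v := by
    refine ⟨fun z hz => hz.1, ⟨R.one_one x, R.one x, h1, R.one_one x, R.ge_left _ _⟩, ?_, ?_⟩
    · rintro a b ⟨_, c, hc, hc1, hca⟩ hb hab
      exact ⟨hb, c, hc, hc1, R.ge_trans' hca hab⟩
    · rintro a b ⟨ha, c, hc, hc1, hca⟩ ⟨hb, d, hd, hd1, hdb⟩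
      have ha' : R.one a = R.one x := ha
      have hb' : R.one b = R.one x := hb
      refine ⟨?_, R.meet c d, hu.1.meet_mem.2 ⟨hc, hd⟩, ?_, R.ge_meet ?_ ?_⟩
      · change R.one _ = _
        rw [one_meet, ha', hb', R.meet_idem]
      · rw [one_meet, hc1, hd1, R.meet_idem]
      · exact R.ge_trans' (R.ge_meet (R.ge_trans' (R.ge_left _ _) (R.ge_left _ _))
          (R.ge_right _ _)) hca
      · exact R.ge_trans' (R.ge_meet (R.ge_trans' (R.ge_left _ _) (R.ge_right _ _))
          (R.ge_right _ _)) hdb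
  by_contra hcx
  have hxv : x ∈ v := ⟨rfl, R.one x, h1, R.one_one x, R.ge_right _ _⟩
  have hsub : u ∩ R.pi1 x ⊆ v := fun z hz => ⟨hz.2, z, hz.1, hz.2, R.ge_left _ _⟩
  have hprop : ∀ a ∈ R.pi1 x, R.zero a ∉ v := by
    rintro b hb ⟨_, a, ha, ha1, hab⟩
    apply hcx
    refine hu.1.up ha (R.ge_of_meet_compl ((R.one_compl x).trans ha1.symm) ?_)
    rw [R.compl_compl, ← R.zero_congr ((hb : R.one b = R.one x).trans ha1.symm)]
    exact hab
  have hin : x ∈ u ∩ R.pi1 x := hmax v hv hprop hsub ▸ hxv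
  exact hx hin.1

/-- A strongly proper filter deciding every `X` with `1_X ∈ v` belongs to `F^RB`. -/
theorem mem_FRB_of_decides {v : Set α} (hv : R.IsFilter v) (hp : R.StronglyProper v)
    (hd : ∀ x, R.one x ∈ v → x ∉ v → R.compl x ∈ v) : v ∈ R.FRB := by
  refine ⟨hv, fun x hx => ⟨⟨fun z hz => hz.2, ⟨hx, R.one_one x⟩, ?_, ?_⟩,
    fun a _ h => hp a h.1, ?_⟩⟩
  · exact fun a b ha hb hab => ⟨hv.up ha.1 hab, hb⟩
  · rintro a b ⟨ha, ha'⟩ ⟨hb, hb'⟩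
    refine ⟨hv.meet_mem.2 ⟨ha, hb⟩, ?_⟩
    change R.one _ = _
    rw [one_meet, show R.one a = _ from ha', show R.one b = _ from hb', R.meet_idem]
  · intro w hw hwp hsub
    refine hsub.antisymm fun a ha => ?_
    have ha1 : R.one a = R.one x := hw.1 ha
    refine ⟨?_, ha1⟩
    by_contra hav
    have hc : R.compl a ∈ w := hsub ⟨hd a (ha1 ▸ hx) hav, (R.one_compl a).trans ha1⟩
    exact hwp a ha1 (hw.2.2.2 a _ ha hc)

/-- The filter generated by a filter `g` and an element `c`. -/
def adjoin (R : RBA α) (g : Set α) (c : α) : Set α := {z | ∃ a ∈ g, R.ge z (R.meet a c)}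

theorem adjoin_isFilter {g : Set α} (hg : R.IsFilter g) (c : α) : R.IsFilter (R.adjoin g c) := by
  refine ⟨⟨R.top, hg.1, R.meet_top _⟩, ?_, ?_⟩
  · rintro x y ⟨a, ha, hax⟩ hxy
    exact ⟨a, ha, R.ge_trans' hax hxy⟩
  · rintro x y ⟨a, ha, hax⟩ ⟨b, hb, hby⟩
    refine ⟨R.meet a b, hg.meet_mem.2 ⟨ha, hb⟩, R.ge_meet ?_ ?_⟩
    · exact R.ge_trans' (R.ge_meet (R.ge_trans' (R.ge_left _ _) (R.ge_left _ _))
        (R.ge_right _ _)) hax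
    · exact R.ge_trans' (R.ge_meet (R.ge_trans' (R.ge_left _ _) (R.ge_right _ _))
        (R.ge_right _ _)) hby

theorem subset_adjoin (g : Set α) (c : α) : g ⊆ R.adjoin g c :=
  fun a ha => ⟨a, ha, R.ge_left _ _⟩

theorem mem_adjoin {g : Set α} (hg : R.IsFilter g) (c : α) : c ∈ R.adjoin g c :=
  ⟨R.top, hg.1, R.ge_right _ _⟩

theorem adjoin_one {g : Set α} (hg : R.IsFilter g) {c : α} (hc : R.one c ∈ g) {x : α}
    (hx : R.one x ∈ R.adjoin g c) : R.one x ∈ g := by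
  obtain ⟨a, ha, hax⟩ := hx
  have h := R.one_mono hax
  rw [one_one, one_meet] at h
  exact hg.up (hg.meet_mem.2 ⟨hg.one_mem ha, hc⟩) h

theorem adjoin_stronglyProper {g : Set α} (hg : R.IsFilter g) {y : α} (h1 : R.one y ∈ g)
    (hy : y ∉ g) : R.StronglyProper (R.adjoin g (R.compl y)) := by
  rintro z ⟨a, ha, haz⟩
  exact hy (hg.up (hg.meet_mem.2 ⟨ha, h1⟩) (R.ge_of_meet_compl_zero haz))

/-- A strongly proper filter extends to an element of `F^RB` containing no new `1_X`. -/
theorem exists_FRB_extension {g : Set α} (hg : R.IsFilter g) (hp : R.StronglyProper g) :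
    ∃ v ∈ R.FRB, g ⊆ v ∧ ∀ x, R.one x ∈ v → R.one x ∈ g := by
  let S : Set (Set α) :=
    {v | R.IsFilter v ∧ R.StronglyProper v ∧ ∀ x, R.one x ∈ v → R.one x ∈ g}
  obtain ⟨v, hgv, hv⟩ := zorn_subset_nonempty S (fun c hcS hc hne => by
    refine ⟨⋃₀ c, ⟨⟨?_, ?_, ?_⟩, ?_, ?_⟩, fun s hs => Set.subset_sUnion_of_mem hs⟩
    · obtain ⟨s, hs⟩ := hne
      exact ⟨s, hs, (hcS hs).1.1⟩
    · rintro x y ⟨s, hs, hxs⟩ hxy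
      exact ⟨s, hs, (hcS hs).1.up hxs hxy⟩
    · rintro x y ⟨s, hs, hxs⟩ ⟨t, ht, hyt⟩
      rcases hc.total hs ht with hst | hst
      · exact ⟨t, ht, (hcS ht).1.meet_mem.2 ⟨hst hxs, hyt⟩⟩
      · exact ⟨s, hs, (hcS hs).1.meet_mem.2 ⟨hxs, hst hyt⟩⟩
    · rintro x ⟨s, hs, hxs⟩
      exact (hcS hs).2.1 x hxs
    · rintro x ⟨s, hs, hxs⟩
      exact (hcS hs).2.2 x hxs) g ⟨hg, hp, fun _ h => h⟩
  obtain ⟨hvf, hvp, hv1⟩ := hv.prop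
  refine ⟨v, mem_FRB_of_decides hvf hvp fun x h1 hx => ?_, hgv, hv1⟩
  have hmem : R.adjoin v (R.compl x) ∈ S :=
    ⟨adjoin_isFilter hvf _, adjoin_stronglyProper hvf h1 hx,
      fun z hz => hv1 z (adjoin_one hvf ((R.one_compl x).symm ▸ h1) hz)⟩
  exact hv.le_of_ge hmem (subset_adjoin v _) (mem_adjoin hvf _)

/-- Prime filter theorem: a strongly proper filter omitting `y` extends to an element of `F^RB`
omitting `y`. -/
theorem exists_FRB_avoiding {g : Set α} (hg : R.IsFilter g) (hp : R.StronglyProper g) {y : α}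
    (hy : y ∉ g) : ∃ v ∈ R.FRB, g ⊆ v ∧ y ∉ v := by
  by_cases h1 : R.one y ∈ g
  · obtain ⟨v, hv, hgv, -⟩ := exists_FRB_extension (adjoin_isFilter hg (R.compl y))
      (adjoin_stronglyProper hg h1 hy)
    exact ⟨v, hv, (subset_adjoin g _).trans hgv, fun hyv =>
      (FRB_stronglyProper hv).not_compl hv.1 hyv (hgv (mem_adjoin hg _))⟩
  · obtain ⟨v, hv, hgv, hv1⟩ := exists_FRB_extension hg hp
    exact ⟨v, hv, hgv, fun hyv => h1 (hv1 y (hv.1.one_mem hyv))⟩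

end RBA

/-! ### The modal operator and the truth lemma -/

namespace MRBA
variable {α : Type*} (M : MRBA α)

/-- The operator `f^K` is the box of the relation `R^RB` on `F^RB`. -/
theorem fK_mem_iff {u : Set α} (hu : u ∈ M.toRBA.FRB) (y : α) :
    M.fK y ∈ u ↔ ∀ v ∈ M.toRBA.FRB, (∀ x, M.fK x ∈ u → x ∈ v) → y ∈ v := by
  refine ⟨fun h v _ hv => hv y h, fun h => ?_⟩
  by_contra hy
  have hg : M.toRBA.IsFilter {x | M.fK x ∈ u} := by
    refine ⟨?_, fun x z hx hxz => ?_, fun x z hx hz => ?_⟩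
    · change M.fK M.top ∈ u
      rw [M.f2]; exact hu.1.1
    · have hxz' : M.meet x z = x := hxz
      refine hu.1.up (x := M.fK x) hx ?_
      change M.meet _ _ = _
      rw [← M.f3, hxz']
    · change M.fK (M.meet x z) ∈ u
      rw [M.f3]; exact hu.1.meet_mem.2 ⟨hx, hz⟩
  have hp : M.toRBA.StronglyProper {x | M.fK x ∈ u} := by
    intro x hx
    apply RBA.FRB_stronglyProper hu x
    rw [← M.fD]; exact hx
  obtain ⟨v, hv, hgv, hyv⟩ := RBA.exists_FRB_avoiding hg hp hy
  exact hyv (h v hv fun x hx => hgv hx)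

end MRBA

/-- Let `M` be a modal RBA, `h⁺` the extension of a homomorphism `h : ℒ(ℙ) → RB`, and
`AM` the awareness model on the ultrafilter frame `(F^RB, ≥^RB, R^RB)` with
`L^h(p) = {u : 1_{h(p)} ∈ u}` and `V^h(p) = {u : h(p) ∈ u}`. Then for all
`φ ∈ ℒ^{A,K}(ℙ)`, `L^h(φ) = {u : 1_{h⁺(φ)} ∈ u}` and `V^h(φ) = {u : h⁺(φ) ∈ u}`. -/
theorem stmt15 {α : Type*} {P : Type*} (M : MRBA α)
    (h : AKForm P → α) (hhom : IsAKHom M h)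
    (AM : AwModel {u : Set α // u ∈ M.toRBA.FRB} P)
    (hge : ∀ u v, AM.ge u v ↔ M.toRBA.pi2 v.1 ⊆ M.toRBA.pi2 u.1)
    (hR : ∀ u v, AM.Rel u v ↔ ∀ x, M.fK x ∈ u.1 → x ∈ v.1)
    (hL : ∀ p u, u ∈ AM.L p ↔ M.toRBA.one (h (.var p)) ∈ u.1)
    (hV : ∀ p u, u ∈ AM.V p ↔ h (.var p) ∈ u.1) :
    ∀ φ : AKForm P,
      AM.Lset φ = {u | M.toRBA.one (h φ) ∈ u.1} ∧
      AM.Vset φ = {u | h φ ∈ u.1} := by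
  obtain ⟨h1, hneg, hconj, hkn, haw⟩ := hhom
  have hD : ∀ φ (u : {u : Set α // u ∈ M.toRBA.FRB}),
      AM.Defined u φ ↔ M.toRBA.one (h φ) ∈ u.1 := by
    intro φ u
    induction φ with
    | var p => simp [AwModel.Defined, AKForm.vars, hL]
    | one =>
      rw [h1, RBA.one_top]
      simpa [AwModel.Defined, AKForm.vars] using u.2.1.1
    | neg φ ih => rw [hneg, RBA.one_compl]; exact ih
    | conj φ ψ ih₁ ih₂ =>
      rw [hconj, RBA.one_meet, u.2.1.meet_mem, ← ih₁, ← ih₂]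
      simp [AwModel.Defined, AKForm.vars, or_imp, forall_and]
    | aw φ ih => rw [haw, M.f1, RBA.one_one]; exact ih
    | kn φ ih => rw [hkn, M.f1]; exact ih
  -- the condition `∀ v, Rel u v → y ∈ v` is membership of `f^K(y)`
  have hbox : ∀ (u : {u : Set α // u ∈ M.toRBA.FRB}) (y : α),
      (∀ v, AM.Rel u v → y ∈ v.1) ↔ M.fK y ∈ u.1 := by
    intro u y
    rw [M.fK_mem_iff u.2]
    simp only [hR, Subtype.forall]
  have hV' : ∀ φ (u : {u : Set α // u ∈ M.toRBA.FRB}),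
      (AM.Defined u φ ∧ AM.Sat φ u) ↔ h φ ∈ u.1 := by
    intro φ
    induction φ with
    | var p =>
      intro u
      rw [hD]
      simp only [AwModel.Sat, hV]
      exact ⟨fun H => H.2, fun H => ⟨u.2.1.one_mem H, H⟩⟩
    | one =>
      intro u
      rw [hD, h1, RBA.one_top]
      simp [AwModel.Sat]
    | neg φ ih =>
      intro u
      have := ih u
      rw [hD] at this
      rw [hD, hneg, RBA.one_compl]
      simp only [AwModel.Sat]
      constructor
      · rintro ⟨hd, hs⟩
        exact (RBA.FRB_decides u.2 hd).2 fun hx => hs (this.2 hx).2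
      · intro hx
        have hd : M.toRBA.one (h φ) ∈ u.1 := by
          rw [← RBA.one_compl]; exact u.2.1.one_mem hx
        exact ⟨hd, fun hs => (RBA.FRB_decides u.2 hd).1 hx (this.1 ⟨hd, hs⟩)⟩
    | conj φ ψ ih₁ ih₂ =>
      intro u
      rw [hconj, u.2.1.meet_mem, ← ih₁, ← ih₂]
      simp only [AwModel.Sat, hD]
      rw [hconj, RBA.one_meet, u.2.1.meet_mem]
      tauto
    | aw φ ih =>
      intro u
      simp only [AwModel.Sat, hD, hbox]
      rw [haw]
      exact ⟨fun H => H.2, fun H => ⟨u.2.1.one_mem H, H⟩⟩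
    | kn φ ih =>
      intro u
      simp only [AwModel.Sat, ih, hbox]
      rw [hD, hkn]
      exact ⟨fun H => H.2, fun H => ⟨u.2.1.one_mem H, H⟩⟩
  exact fun φ => ⟨Set.ext fun u => hD φ u, Set.ext fun u => hV' φ u⟩
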